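/- arXiv:2212.07819 — 2 statements merged into one kernel-verified Lean document; each statement's English description precedes it below -/
import Mathlib

section
/- Let F be a field with at least 4 elements and χ : F^× → {±1} a group homomorphism with χ(−1) = 1. Suppose ℓ ∈ F with ℓ ∉ {0, 1} satisfies χ(ℓ) = −1 and χ(1 − ℓ) = 1. Then for every a ∈ F^× and every t ∈ ℓℤ[ℓ] (i.e. t = ℓ·p(ℓ) for some p ∈ ℤ[X]) with a + t ≠ 0, the classes of [a] and [a + t] in RP₊(F)[1/2]_χ are equal. -/
noncomputable section

open Polynomial

/-- The ring `ℤ[1/2]`, realized as the subring of `ℚ` generated by `1/2`. -/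
def ZhalfSub : Subring ℚ := Subring.closure {(2 : ℚ)⁻¹}

abbrev Zhalf : Type := ZhalfSub

variable (F : Type) [Field F]

/-- The generator `[u]` of the free `ℤ[1/2]`-module on `Fˣ`. -/
def rpGen (u : Fˣ) : Fˣ →₀ Zhalf := Finsupp.single u 1

/-- The defining relations of `RP₊(F)[1/2]_χ`: (i) `[1] = 0`; (ii) the twisted five-term
relations; (iii) `χ(−1)·[x] = [x]`; (iv) `[x] = −[x⁻¹]`. -/
def rpRels (χ : Fˣ →* ℤˣ) : Set (Fˣ →₀ Zhalf) :=
  {v | v = rpGen F 1} ∪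
  {v | ∃ (x y : F) (hx0 : x ≠ 0) (hx1 : x ≠ 1) (hy0 : y ≠ 0) (hy1 : y ≠ 1) (_ : x ≠ y),
      v = rpGen F (Units.mk0 x hx0) - rpGen F (Units.mk0 y hy0)
        + ((χ (Units.mk0 x hx0) : ℤ) : Zhalf) •
            rpGen F (Units.mk0 (y / x) (div_ne_zero hy0 hx0))
        - ((χ (Units.mk0 (x⁻¹ - 1)
              (sub_ne_zero.mpr (fun h => hx1 (inv_eq_one.mp h)))) : ℤ) : Zhalf) •
            rpGen F (Units.mk0 ((1 - x⁻¹) / (1 - y⁻¹))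
              (div_ne_zero (sub_ne_zero.mpr (fun h => hx1 (inv_eq_one.mp h.symm)))
                (sub_ne_zero.mpr (fun h => hy1 (inv_eq_one.mp h.symm)))))
        + ((χ (Units.mk0 (1 - x) (sub_ne_zero.mpr (Ne.symm hx1))) : ℤ) : Zhalf) •
            rpGen F (Units.mk0 ((1 - x) / (1 - y))
              (div_ne_zero (sub_ne_zero.mpr (Ne.symm hx1)) (sub_ne_zero.mpr (Ne.symm hy1))))} ∪
  {v | ∃ u : Fˣ, v = ((χ (-1) : ℤ) : Zhalf) • rpGen F u - rpGen F u} ∪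
  {v | ∃ u : Fˣ, v = rpGen F u + rpGen F u⁻¹}

/-- The submodule of relations. -/
def rpSub (χ : Fˣ →* ℤˣ) : Submodule Zhalf (Fˣ →₀ Zhalf) :=
  Submodule.span Zhalf (rpRels F χ)

/-- The `ℤ[1/2]`-module `RP₊(F)[1/2]_χ`. -/
def RPplus (χ : Fˣ →* ℤˣ) : Type :=
  (Fˣ →₀ Zhalf) ⧸ rpSub F χ

instance (χ : Fˣ →* ℤˣ) : AddCommGroup (RPplus F χ) :=
  inferInstanceAs (AddCommGroup ((Fˣ →₀ Zhalf) ⧸ rpSub F χ))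

instance (χ : Fˣ →* ℤˣ) : Module Zhalf (RPplus F χ) :=
  inferInstanceAs (Module Zhalf ((Fˣ →₀ Zhalf) ⧸ rpSub F χ))

/-- The class `[u]` of `u ∈ F^×` in `RP₊(F)[1/2]_χ`. -/
def rpCls (χ : Fˣ →* ℤˣ) (u : Fˣ) : RPplus F χ :=
  Submodule.Quotient.mk (rpGen F u)

end

/-- `t` is a period of `f` away from `0`. -/
def IsPuncturedPeriod {F M : Type*} [Field F] (f : F → M) (t : F) : Prop :=
  ∀ a, a ≠ 0 → a + t ≠ 0 → f (a + t) = f a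

theorem IsPuncturedPeriod.neg {F M : Type*} [Field F] {f : F → M} {t : F}
    (ht : IsPuncturedPeriod f t) : IsPuncturedPeriod f (-t) := by
  intro a ha hat
  simpa using (ht (a + -t) hat (by simpa using ha)).symm

section TwistedFiveTerm

variable {F M : Type*} [Field F] [AddCommGroup M]

/-- A function on `F` (with arbitrary value at `0`) satisfying the defining relations of
`RP₊(F)[1/2]_χ`, where `e` is the extension by zero of an even character `χ`. -/
structure IsTwistedFiveTerm (e : F →*₀ ℤ) (f : F → M) : Prop where
  even : e (-1) = 1
  map_one : f 1 = 0
  map_inv : ∀ x, x ≠ 0 → f x⁻¹ = -f x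
  five_term : ∀ x y, x ≠ 0 → x ≠ 1 → y ≠ 0 → y ≠ 1 → x ≠ y →
    f x - f y + e x • f (y / x) - (e x * e (1 - x)) • f ((1 - x⁻¹) / (1 - y⁻¹))
      + e (1 - x) • f ((1 - x) / (1 - y)) = 0
  two_torsion_free : ∀ m : M, m + m = 0 → m = 0

theorem eq_one_or_neg_one_of_ne_zero (e : F →*₀ ℤ) {x : F} (hx : x ≠ 0) :
    e x = 1 ∨ e x = -1 :=
  Int.isUnit_iff.mp ((isUnit_iff_ne_zero.mpr hx).map e)

theorem intCharacter_inv (e : F →*₀ ℤ) (x : F) : e x⁻¹ = e x := by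
  rcases eq_or_ne x 0 with rfl | hx
  · simp
  have h : e x * e x⁻¹ = 1 := by rw [← map_mul, mul_inv_cancel₀ hx, _root_.map_one]
  rcases eq_one_or_neg_one_of_ne_zero e hx with h' | h' <;> rw [h'] at h ⊢ <;> omega

theorem intCharacter_div (e : F →*₀ ℤ) (x y : F) : e (x / y) = e x * e y := by
  rw [div_eq_mul_inv, map_mul, intCharacter_inv]

namespace IsTwistedFiveTerm

variable {e : F →*₀ ℤ} {f : F → M}

theorem char_neg (H : IsTwistedFiveTerm e f) (x : F) : e (-x) = e x := by
  rw [← neg_one_mul, map_mul, H.even, one_mul]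

theorem char_sub_comm (H : IsTwistedFiveTerm e f) (x y : F) : e (x - y) = e (y - x) := by
  rw [← neg_sub, H.char_neg]

theorem map_div_comm (H : IsTwistedFiveTerm e f) {x y : F} (hx : x ≠ 0) (hy : y ≠ 0) :
    f (x / y) = -f (y / x) := by
  rw [← inv_div, H.map_inv _ (div_ne_zero hy hx)]

theorem map_neg_one (H : IsTwistedFiveTerm e f) : f (-1) = 0 := by
  have h := H.map_inv (-1) (neg_ne_zero.mpr one_ne_zero)
  rw [inv_neg, inv_one] at h
  exact H.two_torsion_free _ (eq_neg_iff_add_eq_zero.mp h)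

theorem add_map_one_sub_eq (H : IsTwistedFiveTerm e f) {x y : F} (hx : x ≠ 0) (hx' : x ≠ 1)
    (hy : y ≠ 0) (hy' : y ≠ 1) : f x + f (1 - x) = f y + f (1 - y) := by
  rcases eq_or_ne x y with rfl | hxy
  · rfl
  have hx1 : 1 - x ≠ 0 := sub_ne_zero.mpr hx'.symm
  have hy1 : 1 - y ≠ 0 := sub_ne_zero.mpr hy'.symm
  have h1 := H.five_term x y hx hx' hy hy' hxy
  have h2 := H.five_term (1 - x) (1 - y) hx1 (by simpa using hx) hy1 (by simpa using hy)
    (by simpa using hxy)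
  rw [sub_sub_cancel, sub_sub_cancel, H.map_div_comm hy1 hx1, H.map_div_comm hx hy,
    show (1 - (1 - x)⁻¹) / (1 - (1 - y)⁻¹) = (1 - y⁻¹) / (1 - x⁻¹) by
      have hx2 : x - 1 ≠ 0 := sub_ne_zero.mpr hx'
      have hy2 : y - 1 ≠ 0 := sub_ne_zero.mpr hy'
      rw [show 1 - (1 - x)⁻¹ = -x / (1 - x) by field_simp; ring,
        show 1 - (1 - y)⁻¹ = -y / (1 - y) by field_simp; ring,
        show 1 - x⁻¹ = -(1 - x) / x by field_simp; ring,
        show 1 - y⁻¹ = -(1 - y) / y by field_simp; ring]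
      field_simp,
    H.map_div_comm (x := 1 - y⁻¹) (y := 1 - x⁻¹)
      (sub_ne_zero.mpr fun h => hy' (inv_eq_one.mp h.symm))
      (sub_ne_zero.mpr fun h => hx' (inv_eq_one.mp h.symm))] at h2
  linear_combination (norm := module) h1 + h2

theorem map_div_eq_sub (H : IsTwistedFiveTerm e f) {z w : F} (hz : e z = 1) (hz' : e (1 - z) = 1)
    (hw : e w = 1) (hw' : e (1 - w) = -1) :
    f (z / w) = f z - f w ∧
      f ((1 - w) / (1 - z)) = f ((1 - (1 - z)⁻¹) / (1 - (1 - w)⁻¹)) := by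
  have z0 : z ≠ 0 := by rintro rfl; simp at hz
  have w0 : w ≠ 0 := by rintro rfl; simp at hw
  have z1 : 1 - z ≠ 0 := by intro h; simp [h] at hz'
  have w1 : 1 - w ≠ 0 := by intro h; simp [h] at hw'
  have hzw : z ≠ w := by rintro rfl; omega
  have hx' : 1 - z ≠ 1 := by simpa using z0
  have hy' : 1 - w ≠ 1 := by simpa using w0
  have h1 := H.five_term (1 - z) (1 - w) z1 hx' w1 hy' (by simpa using hzw)
  have h2 := H.five_term (1 - w) (1 - z) w1 hy' z1 hx' (by simpa using hzw.symm)
  have h3 := H.add_map_one_sub_eq z1 hx' w1 hy'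
  rw [H.map_div_comm z1 w1, H.map_div_comm (x := 1 - (1 - w)⁻¹) (y := 1 - (1 - z)⁻¹)
    (sub_ne_zero.mpr fun h => hy' (inv_eq_one.mp h.symm))
    (sub_ne_zero.mpr fun h => hx' (inv_eq_one.mp h.symm))] at h2
  simp only [sub_sub_cancel] at h1 h2 h3
  rw [H.map_div_comm w0 z0] at h2
  simp only [hz, hz', hw, hw', one_smul, neg_smul, mul_one] at h1 h2
  have h4 : f ((1 - w) / (1 - z)) = f ((1 - (1 - z)⁻¹) / (1 - (1 - w)⁻¹)) := by
    rw [← sub_eq_zero]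
    apply H.two_torsion_free
    linear_combination (norm := module) h1 + h2
  refine ⟨?_, h4⟩
  rw [h4] at h1
  linear_combination (norm := module) h1 - h3

theorem map_sq (H : IsTwistedFiveTerm e f) {w : F} (hw : e w = 1) (hw' : e (1 - w) = -1)
    (hw1 : 1 + w ≠ 0) : f (w ^ 2) = f w + f w - (f (-w) + f (-w)) := by
  have w0 : w ≠ 0 := by rintro rfl; simp at hw
  have w1 : 1 - w ≠ 0 := by intro h; simp [h] at hw'
  have w2 : w - 1 ≠ 0 := by rwa [← neg_ne_zero, neg_sub]
  have w3 : w ≠ 1 := sub_ne_zero.mp w2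
  have h := H.five_term w w⁻¹ w0 w3 (inv_ne_zero w0) (by simpa using w3) (by
    intro h
    field_simp at h
    rcases mul_eq_zero.mp (show (1 - w) * (1 + w) = 0 by linear_combination -h) with h | h
    · exact w1 h
    · exact hw1 h)
  rw [show w⁻¹ / w = (w ^ 2)⁻¹ by field_simp, inv_inv,
    show (1 - w⁻¹) / (1 - w) = (-w)⁻¹ by
      rw [show 1 - w⁻¹ = -(1 - w) / w by field_simp; ring]
      field_simp,
    show (1 - w) / (1 - w⁻¹) = -w by
      rw [show 1 - w⁻¹ = -(1 - w) / w by field_simp; ring]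
      field_simp,
    H.map_inv _ w0, H.map_inv _ (pow_ne_zero 2 w0), H.map_inv _ (neg_ne_zero.mpr w0)] at h
  simp only [hw, hw', one_smul, neg_smul, one_mul] at h
  linear_combination (norm := module) -h

theorem map_neg_eq_zero (H : IsTwistedFiveTerm e f) {w : F} (hw : e w = 1)
    (hw' : e (1 - w) = -1) (hw1 : e (1 + w) = -1) : f (-w) = 0 := by
  have w0 : w ≠ 0 := by rintro rfl; simp at hw
  have h1 := H.map_sq hw hw' (by intro h; simp [h] at hw1)
  have h2 := (H.map_div_eq_sub (z := w ^ 2) (w := w) (by simp [hw])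
    (by rw [show 1 - w ^ 2 = (1 - w) * (1 + w) by ring, map_mul, hw', hw1]; rfl) hw hw').1
  rw [show w ^ 2 / w = w by field_simp] at h2
  apply H.two_torsion_free
  linear_combination (norm := module) h1 + h2

theorem map_eq_zero (H : IsTwistedFiveTerm e f) {w : F} (hw : e w = 1)
    (hw' : e (1 - w) = -1) : f w = 0 := by
  have w0 : w ≠ 0 := by rintro rfl; simp at hw
  have w1 : 1 - w ≠ 0 := by intro h; simp [h] at hw'
  rcases eq_or_ne (1 + w) 0 with h | h
  · rw [show w = -1 by linear_combination h, H.map_neg_one]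
  rcases eq_one_or_neg_one_of_ne_zero e h with hw1 | hw1
  · have h1 := H.map_sq hw hw' h
    have h2 := (H.map_div_eq_sub (z := -w) (w := w) (by rw [H.char_neg, hw])
      (by rwa [sub_neg_eq_add]) hw hw').1
    rw [neg_div, div_self w0, H.map_neg_one] at h2
    have h3 := (H.map_div_eq_sub (z := w / (1 + w)) (w := w)
      (by rw [intCharacter_div, hw, hw1]; rfl)
      (by rw [show 1 - w / (1 + w) = 1 / (1 + w) by field_simp; ring, intCharacter_div, hw1,
            _root_.map_one]; rfl) hw hw').2
    rw [show (1 - w) / (1 - w / (1 + w)) = 1 - w ^ 2 by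
        rw [show 1 - w / (1 + w) = 1 / (1 + w) by field_simp; ring]
        field_simp; ring,
      show (1 - (1 - w / (1 + w))⁻¹) / (1 - (1 - w)⁻¹) = 1 - w by
        rw [show 1 - w / (1 + w) = 1 / (1 + w) by field_simp; ring,
          show 1 - (1 - w)⁻¹ = -w / (1 - w) by field_simp; ring]
        field_simp; ring] at h3
    have h4 := H.add_map_one_sub_eq (x := w ^ 2) (y := w) (pow_ne_zero 2 w0)
      (by
        intro h5
        rcases mul_eq_zero.mp (show (1 - w) * (1 + w) = 0 by linear_combination -h5) with h6 | h6
        · exact w1 h6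
        · exact h h6) w0 (fun h => w1 (by rw [h, sub_self]))
    linear_combination (norm := module) h1 + h2 + h2 - h4 + h3
  · rw [← neg_neg w]
    exact H.map_neg_eq_zero (by rw [H.char_neg, hw]) (by rwa [sub_neg_eq_add])
      (by rwa [← sub_eq_add_neg])

theorem map_eq_const (H : IsTwistedFiveTerm e f) {c : M}
    (hc : ∀ x, x ≠ 0 → x ≠ 1 → f x + f (1 - x) = c) {y : F} (hy : e y = -1)
    (hy' : e (1 - y) = 1) : f y = c := by
  rw [← hc y (by rintro rfl; simp at hy) (by rintro rfl; simp at hy'),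
    H.map_eq_zero hy' (by rwa [sub_sub_cancel]), add_zero]

theorem map_eq_neg_const (H : IsTwistedFiveTerm e f) {c : M}
    (hc : ∀ x, x ≠ 0 → x ≠ 1 → f x + f (1 - x) = c) {y : F} (hy : e y = -1)
    (hy' : e (1 - y) = -1) : f y = -c := by
  have y0 : y ≠ 0 := by rintro rfl; simp at hy
  rw [← H.map_eq_const hc (y := y⁻¹) (by rwa [intCharacter_inv])
    (by rw [show 1 - y⁻¹ = -(1 - y) / y by field_simp; ring, intCharacter_div, H.char_neg, hy, hy']
        rfl), H.map_inv _ y0, neg_neg]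

theorem const_eq_zero (H : IsTwistedFiveTerm e f) {c : M}
    (hc : ∀ x, x ≠ 0 → x ≠ 1 → f x + f (1 - x) = c) {q w : F} (hw : e w = 1)
    (hw' : e (1 - w) = -1) (hq : e q = -1) (hq' : e (1 - q) = 1) (hqw : e (1 - q * w) = -1) :
    c = 0 := by
  have w0 : w ≠ 0 := by rintro rfl; simp at hw
  have q0 : q ≠ 0 := by rintro rfl; simp at hq
  have w1 : 1 - w ≠ 0 := by intro h; simp [h] at hw'
  have q1 : 1 - q ≠ 0 := by intro h; simp [h] at hq'
  have qw1 : 1 - q * w ≠ 0 := by intro h; simp [h] at hqw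
  have qw2 : q * w - 1 ≠ 0 := by rwa [← neg_ne_zero, neg_sub]
  have hr : (1 - q⁻¹) / (1 - (q * w)⁻¹) = (1 - q) * w / (1 - q * w) := by
    rw [show 1 - q⁻¹ = -(1 - q) / q by field_simp; ring,
      show 1 - (q * w)⁻¹ = -(1 - q * w) / (q * w) by field_simp; ring]
    field_simp
  have h := H.five_term q (q * w) q0 (sub_ne_zero.mp q1).symm (mul_ne_zero q0 w0)
    (sub_ne_zero.mp qw2) (by
      intro h
      exact mul_ne_zero q0 w1 (by linear_combination h))
  rw [hr, mul_div_cancel_left₀ _ q0, H.map_eq_zero hw hw', H.map_eq_const hc hq hq',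
    H.map_eq_neg_const hc (y := q * w) (by rw [map_mul, hq, hw]; rfl) hqw,
    H.map_eq_const hc (y := (1 - q) * w / (1 - q * w))
      (by rw [intCharacter_div, map_mul, hq', hw, hqw]; rfl)
      (by
        rw [show 1 - (1 - q) * w / (1 - q * w) = (1 - w) / (1 - q * w) by field_simp; ring,
          intCharacter_div, hw', hqw]; rfl),
    H.map_eq_neg_const hc (y := (1 - q) / (1 - q * w))
      (by rw [intCharacter_div, hq', hqw]; rfl)
      (by
        rw [show 1 - (1 - q) / (1 - q * w) = q * (1 - w) / (1 - q * w) by field_simp; ring,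
          intCharacter_div, map_mul, hw', hq, hqw]; rfl)] at h
  simp only [hq, hq', one_smul, neg_smul, mul_one] at h
  apply H.two_torsion_free
  linear_combination (norm := module) h

theorem map_div (H : IsTwistedFiveTerm e f) {w : F} (hw : e w = 1) (hw' : e (1 - w) = -1)
    {q : F} (q0 : q ≠ 0) : f (q / w) = f q := by
  have w0 : w ≠ 0 := by rintro rfl; simp at hw
  have w1 : 1 - w ≠ 0 := by intro h; simp [h] at hw'
  have hfw := H.map_eq_zero hw hw'
  have hv : e w⁻¹ = 1 := by rwa [intCharacter_inv]
  have hv' : e (1 - w⁻¹) = -1 := by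
    rw [show 1 - w⁻¹ = -(1 - w) / w by field_simp; ring, intCharacter_div, H.char_neg, hw, hw']
    rfl
  rcases eq_or_ne q 1 with rfl | q1
  · rw [one_div, H.map_inv _ w0, hfw, H.map_one, neg_zero]
  rcases eq_or_ne q w with rfl | qw
  · rw [div_self q0, H.map_one, hfw]
  have q1' : 1 - q ≠ 0 := sub_ne_zero.mpr q1.symm
  have qw' : 1 - q / w ≠ 0 := by
    intro h
    apply qw
    field_simp at h
    linear_combination -h
  have hc : ∀ x, x ≠ 0 → x ≠ 1 → f x + f (1 - x) = f w + f (1 - w) := fun x hx hx' =>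
    H.add_map_one_sub_eq hx hx' w0 (sub_ne_zero.mp w1).symm
  have hqw : e (q / w) = e q := by rw [intCharacter_div, hw, mul_one]
  rcases eq_one_or_neg_one_of_ne_zero e q0 with hq | hq <;> rw [hq] at hqw <;>
  rcases eq_one_or_neg_one_of_ne_zero e q1' with hq1 | hq1
  · rw [(H.map_div_eq_sub hq hq1 hw hw').1, hfw, sub_zero]
  · rcases eq_one_or_neg_one_of_ne_zero e qw' with hqw1 | hqw1
    · have h := (H.map_div_eq_sub hqw hqw1 hv hv').1
      rw [H.map_inv _ w0, hfw, neg_zero, sub_zero, div_inv_eq_mul, div_mul_cancel₀ _ w0] at h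
      exact h.symm
    · rw [H.map_eq_zero hqw hqw1, H.map_eq_zero hq hq1]
  · rw [H.map_eq_const hc hq hq1]
    rcases eq_one_or_neg_one_of_ne_zero e qw' with hqw1 | hqw1
    · rw [H.map_eq_const hc hqw hqw1]
    · rw [H.map_eq_neg_const hc hqw hqw1,
        H.const_eq_zero hc hv hv' hq hq1 (by rwa [← div_eq_mul_inv]), neg_zero]
  · rw [H.map_eq_neg_const hc hq hq1]
    rcases eq_one_or_neg_one_of_ne_zero e qw' with hqw1 | hqw1
    · rw [H.map_eq_const hc hqw hqw1,
        H.const_eq_zero hc hw hw' hqw hqw1 (by rwa [div_mul_cancel₀ _ w0]), neg_zero]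
    · rw [H.map_eq_neg_const hc hqw hqw1]

theorem isPuncturedPeriod_one_sub (H : IsTwistedFiveTerm e f) {w : F} (hw : e w = 1)
    (hw' : e (1 - w) = -1) : IsPuncturedPeriod f (1 - w) := by
  intro a ha hat
  have w0 : w ≠ 0 := by rintro rfl; simp at hw
  rcases eq_or_ne a w with rfl | haw
  · rw [add_sub_cancel, H.map_one, H.map_eq_zero hw hw']
  have hwa : w - a ≠ 0 := sub_ne_zero.mpr haw.symm
  have h1 := H.map_div hw hw' ha
  have h2 := H.map_div hw hw' hwa
  have h3 := H.add_map_one_sub_eq (x := a / w) (y := w - a) (div_ne_zero ha w0)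
    (by rwa [Ne, div_eq_one_iff_eq w0]) hwa (by
      intro h
      exact hat (by linear_combination -h))
  rw [show 1 - a / w = (w - a) / w by field_simp, h1, h2,
    show 1 - (w - a) = a + (1 - w) by ring] at h3
  linear_combination (norm := module) -h3

theorem isPuncturedPeriod_mul (H : IsTwistedFiveTerm e f) {w : F} (hw : e w = 1)
    (hw' : e (1 - w) = -1) {t : F} (ht : IsPuncturedPeriod f t) :
    IsPuncturedPeriod f (w * t) := by
  intro a ha hat
  have w0 : w ≠ 0 := by rintro rfl; simp at hw
  have h : (a + w * t) / w = a / w + t := by field_simp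
  rw [← H.map_div hw hw' hat, h,
    ht (a / w) (div_ne_zero ha w0) (h ▸ div_ne_zero hat w0), H.map_div hw hw' ha]

theorem map_neg_of_isPuncturedPeriod (H : IsTwistedFiveTerm e f) {w : F} (hw : e w = 1)
    (hw' : e (1 - w) = -1) {t : F} (t0 : t ≠ 0) (ht : IsPuncturedPeriod f t) :
    f (-t) = f t := by
  have w0 : w ≠ 0 := by rintro rfl; simp at hw
  have w1 : 1 - w ≠ 0 := by intro h; simp [h] at hw'
  rcases eq_or_ne w (-1) with rfl | hw1
  · simpa [div_neg] using H.map_div hw hw' t0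
  have hl := H.isPuncturedPeriod_one_sub hw hw'
  have key : ∀ h, h ≠ 0 → h ≠ t → h ≠ -t → IsPuncturedPeriod f h → f (-t) = f t := by
    intro h h0 h1 h2 hh
    have n1 : t + h ≠ 0 := fun h3 => h2 (by linear_combination h3)
    have n2 : h + -t ≠ 0 := fun h3 => h1 (by linear_combination h3)
    have e1 := hh t t0 n1
    have e2 := ht h h0 (by rwa [add_comm])
    have e3 := ht.neg h h0 n2
    have e4 := hh (-t) (neg_ne_zero.mpr t0) (by rwa [add_comm])
    rw [← e4, add_comm, e3, ← e2, add_comm, e1]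
  have hne : w * (1 - w) ≠ 1 - w := fun h =>
    w1 (pow_eq_zero_iff two_ne_zero |>.mp (by linear_combination -h))
  have hne' : w * (1 - w) ≠ -(1 - w) := fun h => by
    rcases mul_eq_zero.mp (show (1 - w) * (w + 1) = 0 by linear_combination h) with h | h
    · exact w1 h
    · exact hw1 (by linear_combination h)
  have hl2 := H.isPuncturedPeriod_mul hw hw' hl
  by_cases h1 : 1 - w = t
  · subst h1
    exact key _ (mul_ne_zero w0 w1) hne hne' hl2
  by_cases h2 : 1 - w = -t
  · obtain rfl : t = -(1 - w) := by rw [h2, neg_neg]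
    exact key _ (mul_ne_zero w0 w1) hne' (by rwa [neg_neg]) hl2
  · exact key _ w1 h1 h2 hl

theorem isPuncturedPeriod_add (H : IsTwistedFiveTerm e f) {w : F} (hw : e w = 1)
    (hw' : e (1 - w) = -1) {s t : F} (hs : IsPuncturedPeriod f s) (ht : IsPuncturedPeriod f t) :
    IsPuncturedPeriod f (s + t) := by
  intro a ha hat
  by_cases h1 : a + s = 0
  · by_cases h2 : a + t = 0
    · obtain rfl : s = -a := by linear_combination h1
      obtain rfl : t = -a := by linear_combination h2
      have h := H.map_neg_of_isPuncturedPeriod hw hw' (neg_ne_zero.mpr ha) hs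
      rw [neg_neg] at h
      rw [h]
      congr 1
      ring
    · rw [add_comm s, ← add_assoc] at hat ⊢
      rw [hs _ h2 hat, ht _ ha h2]
  · rw [← add_assoc] at hat ⊢
    rw [ht _ h1 hat, hs _ ha h1]

theorem isPuncturedPeriod_mul_aeval (H : IsTwistedFiveTerm e f) {w : F} (hw : e w = 1)
    (hw' : e (1 - w) = -1) (p : Polynomial ℤ) :
    IsPuncturedPeriod f ((1 - w) * Polynomial.aeval (1 - w) p) := by
  let P : AddSubgroup F :=
    { carrier := {t | IsPuncturedPeriod f t}
      zero_mem' := fun a _ _ => by rw [add_zero]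
      add_mem' := H.isPuncturedPeriod_add hw hw'
      neg_mem' := IsPuncturedPeriod.neg }
  have hP : ∀ t ∈ P, (1 - w) * t ∈ P := fun t ht => by
    rw [sub_mul, one_mul]
    exact P.sub_mem ht (H.isPuncturedPeriod_mul hw hw' ht)
  have hpow : ∀ n : ℕ, (1 - w) * (1 - w) ^ n ∈ P := by
    intro n
    induction n with
    | zero => rw [pow_zero, mul_one]; exact H.isPuncturedPeriod_one_sub hw hw'
    | succ n ih => rw [pow_succ']; exact hP _ ih
  change _ ∈ P
  induction p using Polynomial.induction_on' with
  | add p q hp hq => rw [map_add, mul_add]; exact P.add_mem hp hq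
  | monomial n k =>
    rw [Polynomial.aeval_monomial, mul_left_comm, eq_intCast, ← zsmul_eq_mul]
    exact P.zsmul_mem (hpow n) k

end IsTwistedFiveTerm

end TwistedFiveTerm

open Classical in
/-- The extension by zero of a character `Fˣ → {±1}`. -/
noncomputable def extendChar {F : Type} [Field F] (χ : Fˣ →* ℤˣ) : F →*₀ ℤ where
  toFun x := if h : x = 0 then 0 else (χ (Units.mk0 x h) : ℤ)
  map_zero' := by simp
  map_one' := by simp
  map_mul' x y := by
    by_cases hx : x = 0
    · simp [hx]
    by_cases hy : y = 0
    · simp [hy]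
    · simp [hx, hy, Units.mk0_mul]

open Classical in
/-- The map `u ↦ [u]`, extended by zero to `F`. -/
noncomputable def extendCls {F : Type} [Field F] (χ : Fˣ →* ℤˣ) (x : F) : RPplus F χ :=
  if h : x = 0 then 0 else rpCls F χ (Units.mk0 x h)

theorem extendChar_of_ne_zero {F : Type} [Field F] (χ : Fˣ →* ℤˣ) {x : F} (hx : x ≠ 0) :
    extendChar χ x = (χ (Units.mk0 x hx) : ℤ) := dif_neg hx

theorem extendCls_of_ne_zero {F : Type} [Field F] (χ : Fˣ →* ℤˣ) {x : F} (hx : x ≠ 0) :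
    extendCls χ x = rpCls F χ (Units.mk0 x hx) := dif_neg hx

theorem rpPlus_eq_zero_of_add_self {F : Type} [Field F] (χ : Fˣ →* ℤˣ) (m : RPplus F χ)
    (h : m + m = 0) : m = 0 := by
  let half : Zhalf := ⟨(2 : ℚ)⁻¹, Subring.subset_closure rfl⟩
  have h2 : half + half = 1 := Subtype.ext (by change (2 : ℚ)⁻¹ + 2⁻¹ = 1; norm_num)
  rw [← one_smul Zhalf m, ← h2, add_smul, ← smul_add, h, smul_zero]

theorem isTwistedFiveTerm_extendCls {F : Type} [Field F] (χ : Fˣ →* ℤˣ) (hneg : χ (-1) = 1) :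
    IsTwistedFiveTerm (extendChar χ) (extendCls χ) where
  even := by
    rw [extendChar_of_ne_zero χ (neg_ne_zero.mpr one_ne_zero),
      show Units.mk0 (-1 : F) (neg_ne_zero.mpr one_ne_zero) = -1 from Units.ext rfl, hneg]
    rfl
  map_one := by
    rw [extendCls_of_ne_zero χ one_ne_zero, Units.mk0_one]
    exact (Submodule.Quotient.mk_eq_zero _).mpr
      (Submodule.subset_span (Or.inl (Or.inl (Or.inl rfl))))
  map_inv x hx := by
    rw [extendCls_of_ne_zero χ hx, extendCls_of_ne_zero χ (inv_ne_zero hx),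
      show Units.mk0 x⁻¹ (inv_ne_zero hx) = (Units.mk0 x hx)⁻¹ from Units.ext rfl,
      eq_neg_iff_add_eq_zero, add_comm]
    exact (Submodule.Quotient.mk_eq_zero (rpSub F χ)).mpr
      (Submodule.subset_span (Or.inr ⟨Units.mk0 x hx, rfl⟩))
  five_term x y hx0 hx1 hy0 hy1 hxy := by
    have hx2 : x⁻¹ - 1 ≠ 0 := sub_ne_zero.mpr (fun h => hx1 (inv_eq_one.mp h))
    have h1x : 1 - x ≠ 0 := sub_ne_zero.mpr hx1.symm
    have h1y : 1 - y ≠ 0 := sub_ne_zero.mpr hy1.symm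
    have hxi : 1 - x⁻¹ ≠ 0 := sub_ne_zero.mpr (fun h => hx1 (inv_eq_one.mp h.symm))
    have hyi : 1 - y⁻¹ ≠ 0 := sub_ne_zero.mpr (fun h => hy1 (inv_eq_one.mp h.symm))
    have hrel := (Submodule.Quotient.mk_eq_zero (rpSub F χ)).mpr
      (Submodule.subset_span (Or.inl (Or.inl (Or.inr ⟨x, y, hx0, hx1, hy0, hy1, hxy, rfl⟩))))
    rw [← intCharacter_inv _ x, ← map_mul, show x⁻¹ * (1 - x) = x⁻¹ - 1 by field_simp,
      intCharacter_inv,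
      extendChar_of_ne_zero χ hx0, extendChar_of_ne_zero χ hx2, extendChar_of_ne_zero χ h1x,
      extendCls_of_ne_zero χ hx0, extendCls_of_ne_zero χ hy0,
      extendCls_of_ne_zero χ (div_ne_zero hy0 hx0), extendCls_of_ne_zero χ (div_ne_zero hxi hyi),
      extendCls_of_ne_zero χ (div_ne_zero h1x h1y)]
    simp only [← Int.cast_smul_eq_zsmul Zhalf]
    exact hrel
  two_torsion_free := rpPlus_eq_zero_of_add_self χ

open Polynomial in
/-- Let `F` be a field with at least `4` elements, `χ : F^× → {±1}` with
`χ(−1) = 1`, and `ℓ ∉ {0,1}` with `χ(ℓ) = −1` and `χ(1 − ℓ) = 1`.  Then for every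
`a ∈ F^×` and every `t ∈ ℓℤ[ℓ]` with `a + t ≠ 0`, `[a] = [a + t]` in
`RP₊(F)[1/2]_χ`. -/
theorem stmt4 (F : Type) [Field F] (h4 : 4 ≤ Cardinal.mk F)
    (χ : Fˣ →* ℤˣ) (hneg : χ (-1) = 1)
    (ℓ : F) (hℓ0 : ℓ ≠ 0) (hℓ1 : ℓ ≠ 1)
    (hχℓ : χ (Units.mk0 ℓ hℓ0) = -1)
    (hχ1ℓ : χ (Units.mk0 (1 - ℓ) (sub_ne_zero.mpr (Ne.symm hℓ1))) = 1)
    (a : Fˣ) (t : F) (ht : ∃ p : Polynomial ℤ, t = ℓ * Polynomial.aeval ℓ p)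
    (hat : (a : F) + t ≠ 0) :
    rpCls F χ a = rpCls F χ (Units.mk0 ((a : F) + t) hat) := by
  have hl : 1 - ℓ ≠ 0 := sub_ne_zero.mpr hℓ1.symm
  have hw : extendChar χ (1 - ℓ) = 1 := by
    rw [extendChar_of_ne_zero χ hl, hχ1ℓ]
    rfl
  have hw' : extendChar χ (1 - (1 - ℓ)) = -1 := by
    rw [sub_sub_cancel, extendChar_of_ne_zero χ hℓ0, hχℓ]
    rfl
  obtain ⟨p, rfl⟩ := ht
  have h := (isTwistedFiveTerm_extendCls χ hneg).isPuncturedPeriod_mul_aeval hw hw' p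
  rw [sub_sub_cancel] at h
  have h' := h a a.ne_zero hat
  rwa [extendCls_of_ne_zero χ hat, extendCls_of_ne_zero χ a.ne_zero, Units.mk0_val, eq_comm] at h'
end

section
/- Let F = ℚ(√(−m)) ⊂ ℂ be an imaginary quadratic field of class number 1 (m > 0 squarefree) with ring of integers 𝓞 = ℤ[ω_{−m}]. Let χ : F^× → {±1} be a group homomorphism with χ(u) = 1 for every unit u of 𝓞, and suppose there exist two non-associated prime elements p, q of 𝓞 with χ(p) = χ(q) = −1. Then for every a ∈ F^× and every t ∈ 𝓞 with a + t ≠ 0, the classes of [a] and [a + t] in RP₊(F)[1/2]_χ are equal. -/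
noncomputable section

/-- The complex square root of an integer `d` (equal to `i·√(−d)` when `d < 0`). -/
def sqrtC (d : ℤ) : ℂ :=
  if 0 ≤ d then ((Real.sqrt (d : ℝ) : ℝ) : ℂ) else Complex.I * ((Real.sqrt ((-d : ℤ) : ℝ) : ℝ) : ℂ)

/-- `ω_d ∈ ℂ`: the standard generator of the ring of integers of `ℚ(√d)` for a
squarefree integer `d`, namely `(1 + √d)/2` if `d ≡ 1 (mod 4)` and `√d` otherwise. -/
def omegaQ (d : ℤ) : ℂ :=
  if d % 4 = 1 then (1 + sqrtC d) / 2 else sqrtC d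

/-- The ring `ℤ[ω_d] = ℤ + ℤω_d`, as a subring of `ℂ`. -/
def quadRing (d : ℤ) : Subring ℂ := Subring.closure {omegaQ d}

end

noncomputable section

/-- The imaginary quadratic field `ℚ(√d) = ℚ(ω_d)`, as an intermediate field of `ℚ ⊆ ℂ`. -/
def quadField (d : ℤ) : IntermediateField ℚ ℂ := IntermediateField.adjoin ℚ {omegaQ d}

/-- `ω_d` as an element of `ℚ(√d)`. -/
def omegaK (d : ℤ) : quadField d :=
  ⟨omegaQ d, IntermediateField.subset_adjoin ℚ {omegaQ d} rfl⟩

/-- The ring of integers `𝓞 = ℤ[ω_d] = ℤ + ℤω_d`, as a subring of `ℚ(√d)`. -/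
def intRing (d : ℤ) : Subring (quadField d) := Subring.closure {omegaK d}

end

/-- `f` satisfies the relations of `RP₊(F)[1/2]_χ` for the sign character `k`, extended by zero,
with values in a group without `2`-torsion; its value at `0` is normalised so that
`f x + f (1 - x)` does not depend on `x`. -/
structure IsTwistedFiveTerm_s13 {F M : Type*} [Field F] [AddCommGroup M]
    (k : F →*₀ ℤ) (f : F → M) : Prop where
  eq_one_or : ∀ x, x ≠ 0 → k x = 1 ∨ k x = -1
  map_neg_one : k (-1) = 1
  two_torsion_free : ∀ v : M, v + v = 0 → v = 0
  zero : f 0 = f 2 + f (-1)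
  one : f 1 = 0
  inv : ∀ x, x ≠ 0 → f x⁻¹ = -f x
  five_term : ∀ x y, x ≠ 0 → x ≠ 1 → y ≠ 0 → y ≠ 1 → x ≠ y →
    f x - f y + k x • f (y / x) - (k x * k (1 - x)) • f ((1 - x⁻¹) / (1 - y⁻¹))
      + k (1 - x) • f ((1 - x) / (1 - y)) = 0

namespace IsTwistedFiveTerm_s13

variable {F M : Type*} [Field F] [AddCommGroup M] {k : F →*₀ ℤ} {f : F → M}

theorem map_neg (h : IsTwistedFiveTerm_s13 k f) (x : F) : k (-x) = k x := by
  rw [← neg_one_mul, map_mul, h.map_neg_one, one_mul]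

theorem map_inv (h : IsTwistedFiveTerm_s13 k f) (x : F) : k x⁻¹ = k x := by
  by_cases hx : x = 0
  · simp [hx]
  have h1 : k x * k x⁻¹ = 1 := by rw [← map_mul, mul_inv_cancel₀ hx, map_one]
  rcases h.eq_one_or x hx with hk | hk <;> rw [hk] at h1 ⊢ <;> linarith

theorem map_div_s13 (h : IsTwistedFiveTerm_s13 k f) (x y : F) : k (x / y) = k x * k y := by
  rw [div_eq_mul_inv, map_mul, h.map_inv]

theorem map_one_sub_inv (h : IsTwistedFiveTerm_s13 k f) {x : F} (hx : x ≠ 0) :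
    k (1 - x⁻¹) = k x * k (1 - x) := by
  rw [show 1 - x⁻¹ = -((1 - x) / x) by field_simp; ring, h.map_neg, h.map_div_s13, mul_comm]

theorem ne_zero (_ : IsTwistedFiveTerm_s13 k f) {x : F} {n : ℤ} (hn : k x = n) (h0 : n ≠ 0) :
    x ≠ 0 := by
  rintro rfl
  exact h0 (by rw [← hn, map_zero])

/-- The sum of the five-term relations for `(x, y)` and `(y, x)`. -/
theorem five_term_swap (h : IsTwistedFiveTerm_s13 k f) {x y : F} (hx0 : x ≠ 0) (hx1 : x ≠ 1)
    (hy0 : y ≠ 0) (hy1 : y ≠ 1) (hxy : x ≠ y) :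
    (k x - k y) • f (y / x)
      - (k x * k (1 - x) - k y * k (1 - y)) • f ((1 - x⁻¹) / (1 - y⁻¹))
      + (k (1 - x) - k (1 - y)) • f ((1 - x) / (1 - y)) = 0 := by
  have hX : 1 - x ≠ 0 := sub_ne_zero.2 hx1.symm
  have hY : 1 - y ≠ 0 := sub_ne_zero.2 hy1.symm
  have hX' : 1 - x⁻¹ ≠ 0 := sub_ne_zero.2 fun e => hx1 (inv_eq_one.1 e.symm)
  have hY' : 1 - y⁻¹ ≠ 0 := sub_ne_zero.2 fun e => hy1 (inv_eq_one.1 e.symm)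
  have e1 := h.five_term x y hx0 hx1 hy0 hy1 hxy
  have e2 := h.five_term y x hy0 hy1 hx0 hx1 hxy.symm
  rw [← inv_div y x, ← inv_div (1 - x) (1 - y), ← inv_div (1 - x⁻¹) (1 - y⁻¹),
    h.inv _ (div_ne_zero hy0 hx0), h.inv _ (div_ne_zero hX hY),
    h.inv _ (div_ne_zero hX' hY')] at e2
  linear_combination (norm := module) e1 + e2

theorem add_one_sub_eq_add_one_sub (h : IsTwistedFiveTerm_s13 k f) {x y : F}
    (hx0 : x ≠ 0) (hx1 : x ≠ 1) (hy0 : y ≠ 0) (hy1 : y ≠ 1) :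
    f x + f (1 - x) = f y + f (1 - y) := by
  rcases eq_or_ne x y with rfl | hxy
  · rfl
  have hX : 1 - x ≠ 0 := sub_ne_zero.2 hx1.symm
  have hY : 1 - y ≠ 0 := sub_ne_zero.2 hy1.symm
  have e1 := h.five_term x y hx0 hx1 hy0 hy1 hxy
  have e2 := h.five_term (1 - y) (1 - x) hY (by simpa using hy0) hX (by simpa using hx0)
    (fun e => hxy (by linear_combination e))
  have e3 := h.five_term_swap hx0 hx1 hy0 hy1 hxy
  have hA : (1 - (1 - y)⁻¹) / (1 - (1 - x)⁻¹) = (1 - x⁻¹) / (1 - y⁻¹) := by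
    have a1 : 1 - (1 - y)⁻¹ = -y / (1 - y) := by field_simp; ring
    have a2 : 1 - (1 - x)⁻¹ = -x / (1 - x) := by field_simp; ring
    have a3 : 1 - x⁻¹ = -(1 - x) / x := by field_simp; ring
    have a4 : 1 - y⁻¹ = -(1 - y) / y := by field_simp; ring
    rw [a1, a2, a3, a4]
    field_simp
  simp only [sub_sub_cancel, hA] at e2
  linear_combination (norm := module) e1 - e2 - e3

theorem add_one_sub [CharZero F] (h : IsTwistedFiveTerm_s13 k f) (x : F) :
    f x + f (1 - x) = f 0 := by
  by_cases hx0 : x = 0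
  · simp [hx0, h.one]
  by_cases hx1 : x = 1
  · simp [hx1, h.one]
  rw [h.zero, h.add_one_sub_eq_add_one_sub hx0 hx1 two_ne_zero (by norm_num)]
  norm_num

theorem add_inv_one_sub_inv [CharZero F] (h : IsTwistedFiveTerm_s13 k f) {x : F} (hx0 : x ≠ 0)
    (hx1 : x ≠ 1) : f x + f (1 - x⁻¹)⁻¹ = -f 0 := by
  have hX' : 1 - x⁻¹ ≠ 0 := sub_ne_zero.2 fun e => hx1 (inv_eq_one.1 e.symm)
  rw [h.inv _ hX', ← h.add_one_sub x⁻¹, h.inv _ hx0]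
  abel

theorem eq_of_map_eq_neg_one [CharZero F] (h : IsTwistedFiveTerm_s13 k f) {x : F} (hx : k x = -1) :
    f x = k (1 - x) • f 0 := by
  have hx0 : x ≠ 0 := h.ne_zero hx (by norm_num)
  have hx1 : x ≠ 1 := by rintro rfl; simp at hx
  classical
  obtain ⟨y, hy⟩ := Infinite.exists_notMem_finset ({0, 1, x} : Finset F)
  simp only [Finset.mem_insert, Finset.mem_singleton, not_or] at hy
  obtain ⟨hy0, hy1, hyx⟩ := hy
  have hX : 1 - x ≠ 0 := sub_ne_zero.2 (Ne.symm hx1)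
  have hY : 1 - y ≠ 0 := sub_ne_zero.2 (Ne.symm hy1)
  have hXY : x - y ≠ 0 := sub_ne_zero.2 (Ne.symm hyx)
  have a3 : 1 - x⁻¹ = -(1 - x) / x := by field_simp; ring
  have a4 : 1 - y⁻¹ = -(1 - y) / y := by field_simp; ring
  have e1 := h.five_term x y hx0 hx1 hy0 hy1 (Ne.symm hyx)
  have e2 := h.five_term x⁻¹ (y / x) (inv_ne_zero hx0) (by simpa using hx1)
    (div_ne_zero hy0 hx0) (fun e => hyx ((div_eq_one_iff_eq hx0).1 e))
    (fun e => hy1 (by field_simp at e; exact e.symm))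
  have b1 : (1 - x⁻¹) / (1 - y⁻¹) ≠ 0 := by
    rw [a3, a4]; exact div_ne_zero (div_ne_zero (neg_ne_zero.2 hX) hx0)
      (div_ne_zero (neg_ne_zero.2 hY) hy0)
  have b2 : (1 - x⁻¹) / (1 - y⁻¹) ≠ 1 := fun e => hXY <| by
    rw [a3, a4] at e; field_simp at e; linear_combination -e
  have c1 := h.add_inv_one_sub_inv b1 b2
  have c2 := h.add_inv_one_sub_inv (x := (1 - x) / (1 - y)) (div_ne_zero hX hY)
    (fun e => hXY (by field_simp at e; linear_combination -e))
  have d1 : (1 - ((1 - x⁻¹) / (1 - y⁻¹))⁻¹)⁻¹ = (1 - x⁻¹⁻¹) / (1 - (y / x)⁻¹) := by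
    have : 1 - (y / x)⁻¹ = -(x - y) / y := by field_simp; ring
    have t : 1 - ((1 - x⁻¹) / (1 - y⁻¹))⁻¹ = (x - y) / (-(1 - x) * y) := by
      rw [a3, a4]; field_simp; ring
    rw [this, inv_inv, t]; field_simp
  have d2 : (1 - ((1 - x) / (1 - y))⁻¹)⁻¹ = (1 - x⁻¹) / (1 - y / x) := by
    have : 1 - y / x = (x - y) / x := by field_simp
    have t : 1 - ((1 - x) / (1 - y))⁻¹ = -(x - y) / (1 - x) := by field_simp; ring
    rw [this, t, a3]; field_simp
  rw [d1] at c1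
  rw [d2] at c2
  have d3 : y / x / x⁻¹ = y := by field_simp
  rw [d3, h.inv _ hx0, h.map_inv, h.map_one_sub_inv hx0, hx] at e2
  rw [hx] at e1
  apply sub_eq_zero.1
  apply h.two_torsion_free
  rcases h.eq_one_or _ hX with hk | hk <;> rw [hk] at e1 e2 ⊢
  · linear_combination (norm := module) e1 - e2 - c1 - c2
  · linear_combination (norm := module) e1 - e2 + c1 + c2

theorem one_sub_cross_ratio {x y : F} (hx0 : x ≠ 0) (hy0 : y ≠ 0) (hy1 : 1 - y ≠ 0) :
    1 - (1 - x⁻¹) / (1 - y⁻¹) = (x - y) / (x * (1 - y)) := by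
  have a3 : 1 - x⁻¹ = -(1 - x) / x := by field_simp; ring
  have a4 : 1 - y⁻¹ = -(1 - y) / y := by field_simp; ring
  rw [a3, a4]
  field_simp
  ring

section Scaling

variable [CharZero F] {s X : F}

theorem map_div_of_map_one_sub (h : IsTwistedFiveTerm_s13 k f) (hs : k s = 1)
    (hs' : k (1 - s) = -1) (hX : k X = 1) (hX' : k (1 - X) = 1) : f (X / s) = f X := by
  have hx0 : 1 - X ≠ 0 := h.ne_zero hX' (by norm_num)
  have hy0 : 1 - s ≠ 0 := h.ne_zero hs' (by norm_num)
  have hX0 : X ≠ 0 := h.ne_zero hX (by norm_num)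
  have hs0 : s ≠ 0 := h.ne_zero hs (by norm_num)
  have e := h.five_term (1 - X) (1 - s) hx0 (by simpa using hX0) hy0 (by simpa using hs0)
    (fun e => by rw [e, hs'] at hX'; norm_num at hX')
  have r := one_sub_cross_ratio hx0 hy0 (by simpa using hs0)
  have f1 := h.eq_of_map_eq_neg_one hs'
  have f2 := h.eq_of_map_eq_neg_one (x := (1 - s) / (1 - X)) (by rw [h.map_div_s13, hs', hX']; simp)
  have f3 := h.eq_of_map_eq_neg_one (x := (1 - (1 - X)⁻¹) / (1 - (1 - s)⁻¹)) (by
    rw [h.map_div_s13, h.map_one_sub_inv hx0, h.map_one_sub_inv hy0]; simp [hs, hs', hX, hX'])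
  have f4 := h.add_one_sub X
  have r' : 1 - (1 - s) / (1 - X) = ((1 - X) - (1 - s)) / (1 - X) := by field_simp
  rw [r, h.map_div_s13, map_mul, sub_sub_cancel, hX', hs] at f3
  rw [r', h.map_div_s13, hX'] at f2
  rw [sub_sub_cancel, hs] at f1
  rw [f1, f2, f3, sub_sub_cancel, sub_sub_cancel, hX', hX] at e
  linear_combination (norm := module) e - f4

theorem map_sub_smul_zero (h : IsTwistedFiveTerm_s13 k f) (hs : k s = 1)
    (hs' : k (1 - s) = -1) (hX : k X = -1) (hX' : k (1 - X) = 1) : k (s - X) • f 0 = f 0 := by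
  have hx0 : 1 - X ≠ 0 := h.ne_zero hX' (by norm_num)
  have hy0 : 1 - s ≠ 0 := h.ne_zero hs' (by norm_num)
  have hX0 : X ≠ 0 := h.ne_zero hX (by norm_num)
  have hs0 : s ≠ 0 := h.ne_zero hs (by norm_num)
  have hsX : s - X ≠ 0 := fun e => by rw [sub_eq_zero.1 e, hX] at hs; norm_num at hs
  have e := h.five_term (1 - X) (1 - s) hx0 (by simpa using hX0) hy0 (by simpa using hs0)
    (fun e => by rw [e, hs'] at hX'; norm_num at hX')
  have r := one_sub_cross_ratio hx0 hy0 (by simpa using hs0)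
  have t : 1 - X - (1 - s) = s - X := by ring
  have f1 := h.eq_of_map_eq_neg_one hs'
  have f2 := h.eq_of_map_eq_neg_one (x := (1 - s) / (1 - X)) (by rw [h.map_div_s13, hs', hX']; simp)
  have f3 := h.eq_of_map_eq_neg_one (x := X / s) (by rw [h.map_div_s13, hs, hX]; simp)
  have f4 := h.add_one_sub X
  have f5 := h.eq_of_map_eq_neg_one hX
  have f6 := h.add_one_sub ((1 - (1 - X)⁻¹) / (1 - (1 - s)⁻¹))
  have r' : 1 - (1 - s) / (1 - X) = ((1 - X) - (1 - s)) / (1 - X) := by field_simp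
  have r'' : 1 - X / s = (s - X) / s := by field_simp
  rw [r', t, h.map_div_s13, hX'] at f2
  rw [r'', h.map_div_s13, hs] at f3
  rw [sub_sub_cancel, hs] at f1
  rw [f1, f2, sub_sub_cancel, sub_sub_cancel, f3, hX', hX] at e
  rcases h.eq_one_or _ hsX with hk | hk
  · rw [hk, one_smul]
  · have f7 := h.eq_of_map_eq_neg_one (x := 1 - (1 - (1 - X)⁻¹) / (1 - (1 - s)⁻¹)) (by
      rw [r, t, h.map_div_s13, map_mul, sub_sub_cancel, hk, hX', hs]; norm_num)
    rw [sub_sub_cancel, h.map_div_s13, h.map_one_sub_inv hx0, h.map_one_sub_inv hy0] at f7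
    simp only [sub_sub_cancel, hs, hs', hX, hX'] at f7
    rw [hX'] at f5
    rw [f7] at f6
    rw [hk] at e ⊢
    linear_combination (norm := module) (2 : ℤ) • (e - f4 + f5 - f6)

theorem map_div_eq (h : IsTwistedFiveTerm_s13 k f) (hs : k s = 1) (hs' : k (1 - s) = -1) (X : F) :
    f (X / s) = f X := by
  have hs0 : s ≠ 0 := h.ne_zero hs (by norm_num)
  have hi : k s⁻¹ = 1 := by rw [h.map_inv, hs]
  have hi' : k (1 - s⁻¹) = -1 := by rw [h.map_one_sub_inv hs0, hs, hs']; norm_num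
  have fs : f s = 0 := by
    have e1 := h.add_one_sub s
    have e2 := h.eq_of_map_eq_neg_one hs'
    rw [sub_sub_cancel, hs] at e2
    linear_combination (norm := module) e1 - e2
  by_cases hX0 : X = 0
  · simp [hX0]
  by_cases hX1 : X = 1
  · rw [hX1, one_div, h.inv _ hs0, fs, h.one, neg_zero]
  by_cases hXs : X = s
  · rw [hXs, div_self hs0, fs, h.one]
  have hX1' : 1 - X ≠ 0 := sub_ne_zero.2 (Ne.symm hX1)
  have hXs' : s - X ≠ 0 := sub_ne_zero.2 (Ne.symm hXs)
  have r : 1 - X / s = (s - X) / s := by field_simp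
  have r' : s⁻¹ - X / s = (1 - X) / s := by field_simp
  have q : k (1 - X / s) = k (s - X) := by rw [r, h.map_div_s13, hs, mul_one]
  rcases h.eq_one_or X hX0 with hX | hX
  · have hXs : k (X / s) = 1 := by rw [h.map_div_s13, hs, hX, mul_one]
    rcases h.eq_one_or _ hX1' with hX' | hX'
    · exact h.map_div_of_map_one_sub hs hs' hX hX'
    · rcases h.eq_one_or _ hXs' with hk | hk
      · have := h.map_div_of_map_one_sub hi hi' hXs (q.trans hk)
        rw [← this, div_inv_eq_mul, div_mul_cancel₀ _ hs0]
      · have e1 := h.add_one_sub X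
        have e2 := h.add_one_sub (X / s)
        have e3 := h.eq_of_map_eq_neg_one hX'
        have e4 := h.eq_of_map_eq_neg_one (q.trans hk)
        rw [sub_sub_cancel, hX] at e3
        rw [sub_sub_cancel, hXs] at e4
        linear_combination (norm := module) e2 - e1 + e3 - e4
  · have hXs : k (X / s) = -1 := by rw [h.map_div_s13, hs, hX, mul_one]
    rw [h.eq_of_map_eq_neg_one hX, h.eq_of_map_eq_neg_one hXs, q]
    rcases h.eq_one_or _ hX1' with hX' | hX'
    · rw [h.map_sub_smul_zero hs hs' hX hX', hX', one_smul]
    · rcases h.eq_one_or _ hXs' with hk | hk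
      · have := h.map_sub_smul_zero hi hi' hXs (q.trans hk)
        rw [r', h.map_div_s13, hX', hs] at this
        rw [hk, hX']
        linear_combination (norm := module) -this
      · rw [hk, hX']

theorem map_add_one_sub (h : IsTwistedFiveTerm_s13 k f) (hs : k s = 1) (hs' : k (1 - s) = -1)
    (X : F) : f (X + (1 - s)) = f X := by
  have hs0 : s ≠ 0 := h.ne_zero hs (by norm_num)
  have e1 := h.add_one_sub (X / s)
  have e2 := h.add_one_sub (X + (1 - s))
  have e3 := h.map_div_eq hs hs' (1 - (X + (1 - s)))
  have r : (1 - (X + (1 - s))) / s = 1 - X / s := by field_simp; ring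
  rw [r] at e3
  rw [h.map_div_eq hs hs'] at e1
  linear_combination (norm := module) e2 - e1 + e3

end Scaling

end IsTwistedFiveTerm_s13

/-- The additive group of periods of a function. -/
def periodSubgroup {F M : Type*} [AddCommGroup F] (f : F → M) : AddSubgroup F where
  carrier := {t | ∀ x, f (x + t) = f x}
  zero_mem' x := by rw [add_zero]
  add_mem' {a b} ha hb x := by rw [← add_assoc, hb, ha]
  neg_mem' {a} ha x := by simpa using (ha (x + -a)).symm

/-- The ring of multipliers of an additive subgroup of a ring. -/
def AddSubgroup.multiplierRing {F : Type*} [Ring F] (T : AddSubgroup F) : Subring F where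
  carrier := {r | ∀ t ∈ T, r * t ∈ T}
  one_mem' t ht := by rwa [one_mul]
  mul_mem' {a b} ha hb t ht := by rw [mul_assoc]; exact ha _ (hb _ ht)
  zero_mem' t _ := by rw [zero_mul]; exact T.zero_mem
  add_mem' {a b} ha hb t ht := by rw [add_mul]; exact T.add_mem (ha _ ht) (hb _ ht)
  neg_mem' {a} ha t ht := by rw [neg_mul]; exact T.neg_mem (ha _ ht)

namespace IsTwistedFiveTerm_s13

variable {F M : Type*} [Field F] [AddCommGroup M] {k : F →*₀ ℤ} {f : F → M}

theorem map_one_add_inv (h : IsTwistedFiveTerm_s13 k f) {z : F} (hz : k z = -1)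
    (hz' : k (1 + z) ≠ 1) : k (1 + z⁻¹) = 1 := by
  have hz0 : z ≠ 0 := h.ne_zero hz (by norm_num)
  have h1 : 1 + z ≠ 0 := fun e => by
    rw [← neg_eq_of_add_eq_zero_right e, h.map_neg_one] at hz
    norm_num at hz
  rw [show 1 + z⁻¹ = (1 + z) / z by field_simp; ring, h.map_div_s13, hz,
    (h.eq_one_or _ h1).resolve_left hz']
  norm_num

variable [CharZero F]

theorem mem_periodSubgroup (h : IsTwistedFiveTerm_s13 k f) {z : F} (hz : k z = -1)
    (hz' : k (1 + z) = 1) : z ∈ periodSubgroup f := by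
  intro x
  have := h.map_add_one_sub (s := 1 + z) hz' (by
    rw [show 1 - (1 + z) = -z by ring, h.map_neg, hz]) (x + z)
  rw [← this]
  congr 1
  ring

theorem mem_multiplierRing (h : IsTwistedFiveTerm_s13 k f) {z : F} (hz : k z = -1)
    (hz' : k (1 + z) = 1) : z ∈ (periodSubgroup f).multiplierRing := by
  have hs0 : 1 + z ≠ 0 := h.ne_zero hz' (by norm_num)
  have hs' : k (1 - (1 + z)) = -1 := by rw [show 1 - (1 + z) = -z by ring, h.map_neg, hz]
  have hs : 1 + z ∈ (periodSubgroup f).multiplierRing := fun t ht x => by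
    have e := h.map_div_eq hz' hs'
    rw [← e, ← e x, add_div, mul_div_cancel_left₀ _ hs0, ht]
  simpa using sub_mem hs (one_mem _)

variable {O : Subring F}

theorem integer_mem_multiplierRing (h : IsTwistedFiveTerm_s13 k f)
    (hO : ∀ z ∈ O, ∃ a b : ℤ, z ^ 2 = a * z + b) {z : F} (hz : k z = -1) (hzO : z ∈ O) :
    z ∈ (periodSubgroup f).multiplierRing := by
  by_cases hz' : k (1 + z) = 1
  · exact h.mem_multiplierRing hz hz'
  have hz0 : z ≠ 0 := h.ne_zero hz (by norm_num)
  have hi := h.mem_multiplierRing ((h.map_inv z).trans hz) (h.map_one_add_inv hz hz')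
  obtain ⟨a, b, hab⟩ := hO z hzO
  rw [show z = a + b * z⁻¹ by field_simp; linear_combination hab]
  exact add_mem (intCast_mem _ _) (mul_mem (intCast_mem _ _) hi)

theorem sq_mul_mem_multiplierRing (h : IsTwistedFiveTerm_s13 k f)
    (hO : ∀ z ∈ O, ∃ a b : ℤ, z ^ 2 = a * z + b) {q : F} (hq : k q = -1) (hqO : q ∈ O)
    {x : F} (hx : x ∈ O) : q ^ 2 * x ∈ (periodSubgroup f).multiplierRing := by
  have key : ∀ {z}, k z = -1 → z ∈ O → z ∈ (periodSubgroup f).multiplierRing :=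
    fun hz hzO => h.integer_mem_multiplierRing hO hz hzO
  have hqR := key hq hqO
  by_cases hx0 : x = 0
  · rw [hx0, mul_zero]
    exact zero_mem _
  rcases h.eq_one_or x hx0 with hk | hk
  · have hqx : q * x ∈ (periodSubgroup f).multiplierRing :=
      key (by rw [map_mul, hq, hk]; norm_num) (mul_mem hqO hx)
    rw [pow_two, mul_assoc]
    exact mul_mem hqR hqx
  · exact mul_mem (pow_mem hqR 2) (key hk hx)

theorem le_multiplierRing (h : IsTwistedFiveTerm_s13 k f)
    (hO : ∀ z ∈ O, ∃ a b : ℤ, z ^ 2 = a * z + b) {p q : O} (hp : k p = -1) (hq : k q = -1)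
    (hpq : IsCoprime p q) : O ≤ (periodSubgroup f).multiplierRing := by
  intro x hx
  obtain ⟨a, b, hab⟩ := hpq.pow (m := 2) (n := 2)
  have hab' : (a * p ^ 2 + b * q ^ 2 : F) = 1 := by exact_mod_cast congrArg Subtype.val hab
  rw [show x = p ^ 2 * (a * x) + q ^ 2 * (b * x) by linear_combination -x * hab']
  exact add_mem (h.sq_mul_mem_multiplierRing hO hp p.2 (mul_mem a.2 hx))
    (h.sq_mul_mem_multiplierRing hO hq q.2 (mul_mem b.2 hx))

theorem le_periodSubgroup (h : IsTwistedFiveTerm_s13 k f)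
    (hO : ∀ z ∈ O, ∃ a b : ℤ, z ^ 2 = a * z + b) {p q : O} (hp : k p = -1) (hq : k q = -1)
    (hpq : IsCoprime p q) : O.toAddSubgroup ≤ periodSubgroup f := by
  have hR := h.le_multiplierRing hO hp hq hpq
  have key : ∀ z ∈ O, k z = -1 → z ∈ periodSubgroup f := by
    intro z hzO hz
    by_cases hz' : k (1 + z) = 1
    · exact h.mem_periodSubgroup hz hz'
    have hi := h.mem_periodSubgroup ((h.map_inv z).trans hz) (h.map_one_add_inv hz hz')
    have hz0 : z ≠ 0 := h.ne_zero hz (by norm_num)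
    simpa [pow_two, hz0] using hR (pow_mem hzO 2) _ hi
  have h1 : (1 : F) ∈ periodSubgroup f := by
    obtain ⟨a, b, hab⟩ := hpq
    have hab' : (a * p + b * q : F) = 1 := by exact_mod_cast congrArg Subtype.val hab
    rw [← hab']
    exact add_mem (hR a.2 _ (key p p.2 hp)) (hR b.2 _ (key q q.2 hq))
  intro x hx
  simpa using hR hx 1 h1

end IsTwistedFiveTerm_s13

/-- The extension by zero of a sign character of the unit group of a field. -/
noncomputable def signExtension {F : Type*} [Field F] (χ : Fˣ →* ℤˣ) : F →*₀ ℤ := by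
  classical
  exact
  { toFun := fun x => if hx : x = 0 then 0 else (χ (Units.mk0 x hx) : ℤ)
    map_zero' := by simp
    map_one' := by simp
    map_mul' := fun x y => by
      by_cases hx : x = 0
      · simp [hx]
      by_cases hy : y = 0
      · simp [hy]
      simp [hx, hy] }

theorem signExtension_apply {F : Type*} [Field F] (χ : Fˣ →* ℤˣ) {x : F} (hx : x ≠ 0) :
    signExtension χ x = (χ (Units.mk0 x hx) : ℤ) :=
  dif_neg hx

open Classical in
/-- The symbol `[x]` in `RP₊(F)[1/2]_χ`, extended to `x = 0` by the value `[2] + [-1]` that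
the sums `[x] + [1 - x]` have in common. -/
noncomputable def rpSymbol {F : Type} [Field F] [CharZero F] (χ : Fˣ →* ℤˣ) (x : F) :
    RPplus F χ :=
  if hx : x = 0 then rpCls F χ (Units.mk0 2 two_ne_zero) + rpCls F χ (-1)
  else rpCls F χ (Units.mk0 x hx)

section RPplus

variable {F : Type} [Field F] (χ : Fˣ →* ℤˣ)

theorem rpPlus_mk_eq_zero {v : Fˣ →₀ Zhalf} (hv : v ∈ rpRels F χ) :
    (Submodule.Quotient.mk v : (Fˣ →₀ Zhalf) ⧸ rpSub F χ) = 0 :=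
  (Submodule.Quotient.mk_eq_zero _).2 (Submodule.subset_span hv)

theorem rpCls_one : rpCls F χ 1 = 0 :=
  rpPlus_mk_eq_zero χ (Or.inl (Or.inl (Or.inl rfl)))

theorem rpCls_inv (u : Fˣ) : rpCls F χ u⁻¹ = -rpCls F χ u :=
  eq_neg_of_add_eq_zero_right (rpPlus_mk_eq_zero χ (Or.inr ⟨u, rfl⟩))

theorem rpPlus_two_torsion_free (v : RPplus F χ) (hv : v + v = 0) : v = 0 := by
  let c : Zhalf := ⟨2⁻¹, Subring.subset_closure rfl⟩
  have hc : c + c = 1 := Subtype.ext (by change (2 : ℚ)⁻¹ + 2⁻¹ = 1; norm_num)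
  rw [← one_smul Zhalf v, ← hc, add_smul, ← smul_add, hv, smul_zero]

variable [CharZero F]

theorem rpSymbol_apply {x : F} (hx : x ≠ 0) : rpSymbol χ x = rpCls F χ (Units.mk0 x hx) :=
  dif_neg hx

theorem rpSymbol_five_term {x y : F} (hx0 : x ≠ 0) (hx1 : x ≠ 1) (hy0 : y ≠ 0) (hy1 : y ≠ 1)
    (hxy : x ≠ y) :
    rpSymbol χ x - rpSymbol χ y + signExtension χ x • rpSymbol χ (y / x)
      - signExtension χ (x⁻¹ - 1) • rpSymbol χ ((1 - x⁻¹) / (1 - y⁻¹))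
      + signExtension χ (1 - x) • rpSymbol χ ((1 - x) / (1 - y)) = 0 := by
  have hX : 1 - x ≠ 0 := sub_ne_zero.2 hx1.symm
  have hY : 1 - y ≠ 0 := sub_ne_zero.2 hy1.symm
  have hX' : 1 - x⁻¹ ≠ 0 := sub_ne_zero.2 fun e => hx1 (inv_eq_one.1 e.symm)
  have hY' : 1 - y⁻¹ ≠ 0 := sub_ne_zero.2 fun e => hy1 (inv_eq_one.1 e.symm)
  have hX'' : x⁻¹ - 1 ≠ 0 := sub_ne_zero.2 fun e => hx1 (inv_eq_one.1 e)
  rw [rpSymbol_apply χ hx0, rpSymbol_apply χ hy0, rpSymbol_apply χ (div_ne_zero hy0 hx0),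
    rpSymbol_apply χ (div_ne_zero hX' hY'), rpSymbol_apply χ (div_ne_zero hX hY),
    signExtension_apply χ hx0, signExtension_apply χ hX, signExtension_apply χ hX'']
  simp only [← Int.cast_smul_eq_zsmul Zhalf]
  exact rpPlus_mk_eq_zero χ (Or.inl (Or.inl (Or.inr ⟨x, y, hx0, hx1, hy0, hy1, hxy, rfl⟩)))

theorem isTwistedFiveTerm_rpSymbol (hχ : χ (-1) = 1) :
    IsTwistedFiveTerm_s13 (signExtension χ) (rpSymbol χ) := by
  have hneg : signExtension χ (-1) = 1 := by
    rw [signExtension_apply χ (neg_ne_zero.2 one_ne_zero),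
      show Units.mk0 (-1 : F) (neg_ne_zero.2 one_ne_zero) = -1 from Units.ext rfl, hχ]
    rfl
  have hinv : ∀ x : F, x ≠ 0 → signExtension χ x⁻¹ = signExtension χ x := fun x hx => by
    rw [signExtension_apply χ hx, signExtension_apply χ (inv_ne_zero hx),
      show Units.mk0 x⁻¹ (inv_ne_zero hx) = (Units.mk0 x hx)⁻¹ from Units.ext rfl, map_inv,
      Int.units_inv_eq_self]
  refine ⟨fun x hx => ?_, hneg, rpPlus_two_torsion_free χ, ?_, ?_, fun x hx => ?_,
    fun x y hx0 hx1 hy0 hy1 hxy => ?_⟩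
  · rw [signExtension_apply χ hx]
    rcases Int.units_eq_one_or (χ (Units.mk0 x hx)) with e | e <;> rw [e] <;> simp
  · rw [rpSymbol_apply χ two_ne_zero, rpSymbol_apply χ (neg_ne_zero.2 one_ne_zero),
      show Units.mk0 (-1 : F) (neg_ne_zero.2 one_ne_zero) = -1 from Units.ext rfl]
    exact dif_pos rfl
  · rw [rpSymbol_apply χ one_ne_zero, Units.mk0_one, rpCls_one]
  · rw [rpSymbol_apply χ hx, rpSymbol_apply χ (inv_ne_zero hx), ← rpCls_inv]
    congr 1
    exact Units.ext rfl
  · have e := rpSymbol_five_term χ hx0 hx1 hy0 hy1 hxy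
    rwa [show x⁻¹ - 1 = x⁻¹ * (1 - x) by field_simp, map_mul, hinv x hx0] at e

end RPplus

theorem sqrtC_sq (d : ℤ) : sqrtC d ^ 2 = d := by
  unfold sqrtC
  split_ifs with hd
  · rw [← Complex.ofReal_pow, Real.sq_sqrt (by exact_mod_cast hd)]
    simp
  · rw [mul_pow, Complex.I_sq, ← Complex.ofReal_pow,
      Real.sq_sqrt (by exact_mod_cast (by omega : (0 : ℤ) ≤ -d))]
    simp

theorem exists_omegaK_sq_eq (d : ℤ) : ∃ a b : ℤ, omegaK d ^ 2 = a * omegaK d + b := by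
  have hs := sqrtC_sq d
  by_cases hd : d % 4 = 1
  · refine ⟨1, d / 4, Subtype.ext ?_⟩
    have hd' : (d : ℂ) = 4 * (d / 4 : ℤ) + 1 := by
      exact_mod_cast (by omega : d = 4 * (d / 4) + 1)
    change omegaQ d ^ 2 = ((1 : ℤ) : ℂ) * omegaQ d + ((d / 4 : ℤ) : ℂ)
    rw [omegaQ, if_pos hd]
    push_cast at hd' ⊢
    linear_combination hs / 4 + hd' / 4
  · refine ⟨0, d, Subtype.ext ?_⟩
    change omegaQ d ^ 2 = ((0 : ℤ) : ℂ) * omegaQ d + (d : ℂ)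
    rw [omegaQ, if_neg hd, hs]
    simp

theorem exists_eq_add_mul_omegaK {d : ℤ} {z : quadField d} (hz : z ∈ intRing d) :
    ∃ a b : ℤ, z = a + b * omegaK d := by
  obtain ⟨c, e, hω⟩ := exists_omegaK_sq_eq d
  induction hz using Subring.closure_induction with
  | mem x hx => exact ⟨0, 1, by rw [Set.mem_singleton_iff.1 hx]; simp⟩
  | zero => exact ⟨0, 0, by simp⟩
  | one => exact ⟨1, 0, by simp⟩
  | add x y _ _ hx hy =>
    obtain ⟨a, b, rfl⟩ := hx
    obtain ⟨a', b', rfl⟩ := hy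
    exact ⟨a + a', b + b', by push_cast; ring⟩
  | neg x _ hx =>
    obtain ⟨a, b, rfl⟩ := hx
    exact ⟨-a, -b, by push_cast; ring⟩
  | mul x y _ _ hx hy =>
    obtain ⟨a, b, rfl⟩ := hx
    obtain ⟨a', b', rfl⟩ := hy
    exact ⟨a * a' + b * b' * e, a * b' + a' * b + b * b' * c, by
      push_cast
      linear_combination (b * b' : quadField d) * hω⟩

theorem exists_sq_eq_of_mem_intRing {d : ℤ} {z : quadField d} (hz : z ∈ intRing d) :
    ∃ a b : ℤ, z ^ 2 = a * z + b := by
  obtain ⟨c, e, hω⟩ := exists_omegaK_sq_eq d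
  obtain ⟨a, b, rfl⟩ := exists_eq_add_mul_omegaK hz
  exact ⟨2 * a + b * c, b ^ 2 * e - a ^ 2 - a * b * c, by
    push_cast
    linear_combination (b ^ 2 : quadField d) * hω⟩

/-- Let `F = ℚ(√(−m))` be an imaginary quadratic field of class number `1`
(`m > 0` squarefree) with ring of integers `𝓞 = ℤ[ω_{−m}]`.  Let `χ : F^× → {±1}` be a
homomorphism trivial on the units of `𝓞` with `χ(p) = χ(q) = −1` for two non-associated
primes `p, q` of `𝓞`.  Then `[a] = [a + t]` in `RP₊(F)[1/2]_χ` for every `a ∈ F^×` and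
every `t ∈ 𝓞` with `a + t ≠ 0`. -/
theorem stmt13 (m : ℤ) (hm : 0 < m) (hsq : Squarefree m)
    (hcl : IsPrincipalIdealRing (intRing (-m)))
    (χ : (quadField (-m))ˣ →* ℤˣ)
    (hunits : ∀ u : (intRing (-m))ˣ,
      χ (Units.map (intRing (-m)).subtype.toMonoidHom u) = 1)
    (p q : intRing (-m)) (hp : Prime p) (hq : Prime q) (hpq : ¬ Associated p q)
    (hχp : χ (Units.mk0 ((p : quadField (-m))) (by simpa using hp.ne_zero)) = -1)
    (hχq : χ (Units.mk0 ((q : quadField (-m))) (by simpa using hq.ne_zero)) = -1) :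
    ∀ (a : (quadField (-m))ˣ) (t : intRing (-m)) (hat : (a : quadField (-m)) + t ≠ 0),
      rpCls (quadField (-m)) χ a = rpCls (quadField (-m)) χ (Units.mk0 _ hat) := by
  intro a t hat
  have hχ : χ (-1) = 1 := by
    rw [← hunits (-1)]
    exact congrArg χ (Units.ext (by simp))
  have h := isTwistedFiveTerm_rpSymbol χ hχ
  have hcop : IsCoprime p q :=
    (hp.irreducible.coprime_iff_not_dvd).2 fun hdvd => hpq (hp.associated_of_dvd hq hdvd)
  have hp0 : (p : quadField (-m)) ≠ 0 := by simpa using hp.ne_zero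
  have hq0 : (q : quadField (-m)) ≠ 0 := by simpa using hq.ne_zero
  have ht : (t : quadField (-m)) ∈ periodSubgroup (rpSymbol χ) :=
    h.le_periodSubgroup (O := intRing (-m)) (fun z hz => exists_sq_eq_of_mem_intRing hz)
      (p := p) (q := q) (by rw [signExtension_apply χ hp0, hχp]; rfl)
      (by rw [signExtension_apply χ hq0, hχq]; rfl) hcop t.2
  have e := ht a
  rw [rpSymbol_apply χ hat, rpSymbol_apply χ a.ne_zero, Units.mk0_val] at e
  exact e.symm
end
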